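/- Let C be a copula with attained asymmetry m. Then φ(C) ≤ 1 − 12m², and moreover φ(C) ≥ −1/2 if 0 ≤ m ≤ 1/4 while φ(C) ≥ 24m² − 12m + 1 if 1/4 ≤ m ≤ 1/3, where φ(C) is Spearman's footrule of C. In particular, if m = 1/3 then φ(C) = −1/3. -/

import Mathlib

open Set MeasureTheory intervalIntegral

/-- A bivariate copula: boundary conditions plus the 2-increasing property. -/
def IsCopula (C : ℝ → ℝ → ℝ) : Prop :=
  (∀ u ∈ Set.Icc (0:ℝ) 1, C u 0 = 0 ∧ C 0 u = 0 ∧ C u 1 = u ∧ C 1 u = u) ∧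
  ∀ u₁ u₂ v₁ v₂ : ℝ, 0 ≤ u₁ → u₁ ≤ u₂ → u₂ ≤ 1 → 0 ≤ v₁ → v₁ ≤ v₂ → v₂ ≤ 1 →
    0 ≤ C u₂ v₂ - C u₂ v₁ - C u₁ v₂ + C u₁ v₁

/-- The lower bound function C̲^{(a,b)}_c. -/
noncomputable def lowerC (a b c : ℝ) : ℝ → ℝ → ℝ := fun u v =>
  max (max (u + v - 1) 0)
    (min (min (max (a + b - 1) 0 + c) (u - a + (max (a + b - 1) 0 + c)))
      (min (v - b + (max (a + b - 1) 0 + c)) (u + v - a - b + (max (a + b - 1) 0 + c))))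

/-- The upper bound function C̄^{(a,b)}_c. -/
noncomputable def upperC (a b c : ℝ) : ℝ → ℝ → ℝ := fun u v =>
  min (min u v)
    (max (max (min a b - c) (u - b + (min a b - c)))
      (max (v - a + (min a b - c)) (u + v - a - b + (min a b - c))))

/-- Spearman's rho of a copula. -/
noncomputable def spearmanRho (C : ℝ → ℝ → ℝ) : ℝ :=
  12 * (∫ u in (0:ℝ)..1, ∫ v in (0:ℝ)..1, C u v) - 3

/-- Spearman's footrule of a copula. -/
noncomputable def spearmanFootrule (C : ℝ → ℝ → ℝ) : ℝ :=
  6 * (∫ u in (0:ℝ)..1, C u u) - 2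

/-- Gini's gamma of a copula. -/
noncomputable def giniGamma (C : ℝ → ℝ → ℝ) : ℝ :=
  4 * (∫ u in (0:ℝ)..1, (C u u + C u (1 - u))) - 2

/-- Blomqvist's beta of a copula. -/
noncomputable def blomqvistBeta (C : ℝ → ℝ → ℝ) : ℝ :=
  4 * C (1/2) (1/2) - 1

/-!
Write `g u = u - C u u` for the gap between the diagonals of the comonotone copula and of `C`, so
that the footrule is `1 - 6 ∫ g`. Both bounds compare `g` with a trapezoid of slopes `±1`.

Let `m = |C a b - C b a|` with `a ≤ b`. Then `m ≤ a`, `m ≤ b - a` and `m ≤ 1 - b`, while `m ≤ g` on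
`[a, b]`. As `g` is 1-Lipschitz, it dominates the trapezoid of height `m` over `[a - m, b + m]`,
whose area is `m (b - a + m) ≥ 2 m²`. In the other direction `g u ≤ min u (1 - u)`, a
triangle of area `1/4`, and the asymmetry forces `g ≤ 1 - 2 m`; for `m ≥ 1/4` these bounds cut out
the trapezoid of height `1 - 2 m` over `[0, 1]`, whose area is `2 m (1 - 2 m)`.
-/

/-- The trapezoidal function over `[p, q]` with slopes `1` and `-1` and plateau at height `h`. It is
not truncated at `0`, so it is negative outside `[p, q]`. -/
noncomputable def trapezoid (p q h u : ℝ) : ℝ := min h (min (u - p) (q - u))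

theorem continuous_trapezoid (p q h : ℝ) : Continuous (trapezoid p q h) := by
  unfold trapezoid
  fun_prop

theorem integral_trapezoid {p q h : ℝ} (hh : 0 ≤ h) (hpq : 2 * h ≤ q - p) :
    ∫ u in p..q, trapezoid p q h u = h * (q - p - h) := by
  have integrable (x y : ℝ) : IntervalIntegrable (trapezoid p q h) volume x y :=
    (continuous_trapezoid p q h).intervalIntegrable x y
  have rising : ∫ u in p..(p + h), trapezoid p q h u = h ^ 2 / 2 := by
    have heq : EqOn (trapezoid p q h) (fun u => u - p) (uIcc p (p + h)) := fun u hu => by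
      rw [uIcc_of_le (by linarith)] at hu
      rw [trapezoid, min_eq_left (show u - p ≤ q - u by linarith [hu.2]),
        min_eq_right (show u - p ≤ h by linarith [hu.2])]
    rw [integral_congr heq, integral_comp_sub_right (fun u => u) p, integral_id]
    ring
  have plateau : ∫ u in (p + h)..(q - h), trapezoid p q h u = h * (q - p - 2 * h) := by
    have heq : EqOn (trapezoid p q h) (fun _ => h) (uIcc (p + h) (q - h)) := fun u hu => by
      rw [uIcc_of_le (by linarith)] at hu
      exact min_eq_left (le_min (by linarith [hu.1]) (by linarith [hu.2]))
    rw [integral_congr heq, intervalIntegral.integral_const, smul_eq_mul]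
    ring
  have falling : ∫ u in (q - h)..q, trapezoid p q h u = h ^ 2 / 2 := by
    have heq : EqOn (trapezoid p q h) (fun u => q - u) (uIcc (q - h) q) := fun u hu => by
      rw [uIcc_of_le (by linarith)] at hu
      rw [trapezoid, min_eq_right (show q - u ≤ u - p by linarith [hu.1]),
        min_eq_right (show q - u ≤ h by linarith [hu.1])]
    rw [integral_congr heq, integral_comp_sub_left (fun u => u) q, integral_id]
    ring
  rw [← integral_add_adjacent_intervals (integrable p (q - h)) (integrable (q - h) q),
    ← integral_add_adjacent_intervals (integrable p (p + h)) (integrable (p + h) (q - h)),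
    rising, plateau, falling]
  ring

theorem trapezoid_le_of_lipschitzOnWith {f : ℝ → ℝ} {s : Set ℝ} {a b h u : ℝ}
    (hf : LipschitzOnWith 1 f s) (ha : a ∈ s) (hb : b ∈ s) (hu : u ∈ s) (hab : a ≤ b)
    (hh : ∀ x ∈ Icc a b, h ≤ f x) : trapezoid (a - h) (b + h) h u ≤ f u := by
  rw [trapezoid, min_le_iff, min_le_iff]
  rcases le_total u a with hua | hau
  · right; left
    have := hf.le_add_mul ha hu
    rw [Real.dist_eq, abs_of_nonneg (sub_nonneg.2 hua), NNReal.coe_one] at this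
    linarith [hh a (left_mem_Icc.2 hab)]
  rcases le_total u b with hub | hbu
  · exact Or.inl (hh u ⟨hau, hub⟩)
  · right; right
    have := hf.le_add_mul hb hu
    rw [dist_comm, Real.dist_eq, abs_of_nonneg (sub_nonneg.2 hbu), NNReal.coe_one] at this
    linarith [hh b (right_mem_Icc.2 hab)]

/-- The gap `u - C u u` between the diagonal of the comonotone copula `min` and that of `C`; it
turns Spearman's footrule into an area. -/
def diagGap (C : ℝ → ℝ → ℝ) (u : ℝ) : ℝ := u - C u u

namespace IsCopula

section Basic

variable {C : ℝ → ℝ → ℝ} {u u' v v' : ℝ}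

theorem swap (hC : IsCopula C) : IsCopula (fun u v => C v u) := by
  refine ⟨fun u hu => ?_, fun u₁ u₂ v₁ v₂ h₁ h₂ h₃ h₄ h₅ h₆ => ?_⟩
  · obtain ⟨h₁, h₂, h₃, h₄⟩ := hC.1 u hu
    exact ⟨h₂, h₁, h₄, h₃⟩
  · linarith [hC.2 v₁ v₂ u₁ u₂ h₄ h₅ h₆ h₁ h₂ h₃]

theorem mono_left (hC : IsCopula C) (hu : u ∈ Icc (0 : ℝ) 1) (hu' : u' ∈ Icc (0 : ℝ) 1)
    (hv : v ∈ Icc (0 : ℝ) 1) (huu' : u ≤ u') : C u v ≤ C u' v := by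
  linarith [hC.2 u u' 0 v hu.1 huu' hu'.2 le_rfl hv.1 hv.2, (hC.1 u hu).1, (hC.1 u' hu').1]

theorem mono_right (hC : IsCopula C) (hu : u ∈ Icc (0 : ℝ) 1) (hv : v ∈ Icc (0 : ℝ) 1)
    (hv' : v' ∈ Icc (0 : ℝ) 1) (hvv' : v ≤ v') : C u v ≤ C u v' :=
  hC.swap.mono_left hv hv' hu hvv'

theorem sub_le_sub_left (hC : IsCopula C) (hu : u ∈ Icc (0 : ℝ) 1) (hu' : u' ∈ Icc (0 : ℝ) 1)
    (hv : v ∈ Icc (0 : ℝ) 1) (huu' : u ≤ u') : C u' v - C u v ≤ u' - u := by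
  linarith [hC.2 u u' v 1 hu.1 huu' hu'.2 hv.1 hv.2 le_rfl, (hC.1 u hu).2.2.1,
    (hC.1 u' hu').2.2.1]

theorem sub_le_sub_right (hC : IsCopula C) (hu : u ∈ Icc (0 : ℝ) 1) (hv : v ∈ Icc (0 : ℝ) 1)
    (hv' : v' ∈ Icc (0 : ℝ) 1) (hvv' : v ≤ v') : C u v' - C u v ≤ v' - v :=
  hC.swap.sub_le_sub_left hv hv' hu hvv'

theorem nonneg (hC : IsCopula C) (hu : u ∈ Icc (0 : ℝ) 1) (hv : v ∈ Icc (0 : ℝ) 1) :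
    0 ≤ C u v :=
  (hC.1 v hv).2.1 ▸ hC.mono_left unitInterval.zero_mem hu hv hu.1

theorem le_left (hC : IsCopula C) (hu : u ∈ Icc (0 : ℝ) 1) (hv : v ∈ Icc (0 : ℝ) 1) :
    C u v ≤ u :=
  (hC.mono_right hu hv unitInterval.one_mem hv.2).trans_eq (hC.1 u hu).2.2.1

theorem add_sub_one_le (hC : IsCopula C) (hu : u ∈ Icc (0 : ℝ) 1) (hv : v ∈ Icc (0 : ℝ) 1) :
    u + v - 1 ≤ C u v := by
  linarith [hC.sub_le_sub_left hu unitInterval.one_mem hv hu.2, (hC.1 v hv).2.2.2]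

theorem diag_mono (hC : IsCopula C) (hu : u ∈ Icc (0 : ℝ) 1) (hv : v ∈ Icc (0 : ℝ) 1)
    (huv : u ≤ v) : C u u ≤ C v v :=
  (hC.mono_left hu hv hu huv).trans (hC.mono_right hv hu hv huv)

theorem diag_sub_le (hC : IsCopula C) (hu : u ∈ Icc (0 : ℝ) 1) (hv : v ∈ Icc (0 : ℝ) 1)
    (huv : u ≤ v) : C v v - C u u ≤ 2 * (v - u) := by
  linarith [hC.sub_le_sub_left hu hv hu huv, hC.sub_le_sub_right hv hu hv huv]

end Basic

section DiagGap

variable {C : ℝ → ℝ → ℝ} {u : ℝ}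

theorem diagGap_nonneg (hC : IsCopula C) (hu : u ∈ Icc (0 : ℝ) 1) : 0 ≤ diagGap C u :=
  sub_nonneg.2 (hC.le_left hu hu)

theorem diagGap_le_self (hC : IsCopula C) (hu : u ∈ Icc (0 : ℝ) 1) : diagGap C u ≤ u :=
  sub_le_self u (hC.nonneg hu hu)

theorem diagGap_le_one_sub (hC : IsCopula C) (hu : u ∈ Icc (0 : ℝ) 1) : diagGap C u ≤ 1 - u := by
  rw [diagGap]
  linarith [hC.add_sub_one_le hu hu]

theorem lipschitzOnWith_diagGap (hC : IsCopula C) : LipschitzOnWith 1 (diagGap C) (Icc 0 1) := by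
  refine LipschitzOnWith.of_le_add fun u hu v hv => ?_
  rw [Real.dist_eq, diagGap, diagGap]
  rcases le_total u v with huv | hvu
  · linarith [hC.diag_sub_le hu hv huv, neg_le_abs (u - v)]
  · linarith [hC.diag_mono hv hu hvu, le_abs_self (u - v)]

theorem intervalIntegrable_diagGap (hC : IsCopula C) :
    IntervalIntegrable (diagGap C) volume 0 1 :=
  hC.lipschitzOnWith_diagGap.continuousOn.intervalIntegrable_of_Icc zero_le_one

theorem spearmanFootrule_eq (hC : IsCopula C) :
    spearmanFootrule C = 1 - 6 * ∫ u in (0 : ℝ)..1, diagGap C u := by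
  have hdiag (u : ℝ) : C u u = u - diagGap C u := (sub_sub_cancel u (C u u)).symm
  simp only [spearmanFootrule, hdiag]
  rw [integral_sub intervalIntegrable_id hC.intervalIntegrable_diagGap, integral_id]
  ring

theorem le_spearmanFootrule_of_diagGap_le (hC : IsCopula C) {h : ℝ} (hh : 2 * h ≤ 1)
    (hgap : ∀ u ∈ Icc (0 : ℝ) 1, diagGap C u ≤ h) :
    1 - 6 * (h * (1 - h)) ≤ spearmanFootrule C := by
  have h_nonneg : 0 ≤ h :=
    (hC.diagGap_nonneg unitInterval.zero_mem).trans (hgap 0 unitInterval.zero_mem)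
  have harea : ∫ u in (0 : ℝ)..1, diagGap C u ≤ h * (1 - h) := calc
    _ ≤ ∫ u in (0 : ℝ)..1, trapezoid 0 1 h u :=
      integral_mono_on zero_le_one hC.intervalIntegrable_diagGap
        ((continuous_trapezoid 0 1 h).intervalIntegrable 0 1) fun u hu =>
          le_min (hgap u hu)
            (le_min ((hC.diagGap_le_self hu).trans_eq (sub_zero u).symm)
              (hC.diagGap_le_one_sub hu))
    _ = h * (1 - h) := by rw [integral_trapezoid h_nonneg (by linarith), sub_zero]
  linarith [hC.spearmanFootrule_eq]

theorem neg_half_le_spearmanFootrule (hC : IsCopula C) : -(1 / 2) ≤ spearmanFootrule C := by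
  have := hC.le_spearmanFootrule_of_diagGap_le (h := 1 / 2) (by norm_num) fun u hu => by
    linarith [hC.diagGap_le_self hu, hC.diagGap_le_one_sub hu]
  linarith

end DiagGap

section Asymmetry

variable {C : ℝ → ℝ → ℝ} {a b u : ℝ}

theorem abs_sub_swap_le_left (hC : IsCopula C) (ha : a ∈ Icc (0 : ℝ) 1)
    (hb : b ∈ Icc (0 : ℝ) 1) : |C a b - C b a| ≤ a :=
  abs_sub_le_of_nonneg_of_le (hC.nonneg ha hb) (hC.le_left ha hb) (hC.nonneg hb ha)
    (hC.swap.le_left ha hb)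

theorem abs_sub_swap_le_one_sub (hC : IsCopula C) (ha : a ∈ Icc (0 : ℝ) 1)
    (hb : b ∈ Icc (0 : ℝ) 1) : |C a b - C b a| ≤ 1 - b :=
  abs_sub_le_iff.2
    ⟨by linarith [hC.le_left ha hb, hC.add_sub_one_le hb ha],
      by linarith [hC.swap.le_left ha hb, hC.add_sub_one_le ha hb]⟩

theorem abs_sub_swap_le_sub (hC : IsCopula C) (ha : a ∈ Icc (0 : ℝ) 1)
    (hb : b ∈ Icc (0 : ℝ) 1) (hab : a ≤ b) : |C a b - C b a| ≤ b - a :=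
  abs_sub_le_iff.2
    ⟨by linarith [hC.sub_le_sub_right ha ha hb hab, hC.mono_left ha hb ha hab],
      by linarith [hC.sub_le_sub_left ha hb ha hab, hC.mono_right ha ha hb hab]⟩

theorem sub_swap_le_diagGap (hC : IsCopula C) (ha : a ∈ Icc (0 : ℝ) 1)
    (hb : b ∈ Icc (0 : ℝ) 1) (hu : u ∈ Icc a b) : C a b - C b a ≤ diagGap C u := by
  have hu' : u ∈ Icc (0 : ℝ) 1 := Icc_subset_Icc ha.1 hb.2 hu
  have hdiag : C u u ≤ C b a + (u - a) := by
    linarith [hC.sub_le_sub_right hu' ha hu' hu.1, hC.mono_left hu' hb ha hu.2]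
  rw [diagGap]
  linarith [hC.le_left ha hb]

theorem abs_sub_swap_le_diagGap (hC : IsCopula C) (ha : a ∈ Icc (0 : ℝ) 1)
    (hb : b ∈ Icc (0 : ℝ) 1) (hu : u ∈ Icc a b) : |C a b - C b a| ≤ diagGap C u :=
  abs_sub_le_iff.2 ⟨hC.sub_swap_le_diagGap ha hb hu, hC.swap.sub_swap_le_diagGap ha hb hu⟩

theorem diagGap_le_sub (hC : IsCopula C) (ha : a ∈ Icc (0 : ℝ) 1) (hb : b ∈ Icc (0 : ℝ) 1)
    (hu : u ∈ Icc a b) : diagGap C u ≤ b - C a b := by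
  have hu' : u ∈ Icc (0 : ℝ) 1 := Icc_subset_Icc ha.1 hb.2 hu
  rw [diagGap]
  linarith [hC.mono_left ha hu' hb hu.1, hC.sub_le_sub_right hu' hu' hb hu.2]

theorem diagGap_le_sub_abs_sub_swap (hC : IsCopula C) (ha : a ∈ Icc (0 : ℝ) 1)
    (hb : b ∈ Icc (0 : ℝ) 1) (hu : u ∈ Icc a b) : diagGap C u ≤ b - |C a b - C b a| := by
  rw [le_sub_comm, abs_sub_le_iff]
  constructor
  · linarith [hC.diagGap_le_sub ha hb hu, hC.nonneg hb ha]
  · have : diagGap C u ≤ b - C b a := hC.swap.diagGap_le_sub ha hb hu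
    linarith [hC.nonneg ha hb]

theorem diagGap_le_one_sub_two_mul (hC : IsCopula C) (ha : a ∈ Icc (0 : ℝ) 1)
    (hb : b ∈ Icc (0 : ℝ) 1) (hab : a ≤ b) (hu : u ∈ Icc (0 : ℝ) 1) :
    diagGap C u ≤ 1 - 2 * |C a b - C b a| := by
  have hleft := hC.abs_sub_swap_le_left ha hb
  have hsub := hC.abs_sub_swap_le_sub ha hb hab
  have hright := hC.abs_sub_swap_le_one_sub ha hb
  rcases le_total u a with hua | hau
  · linarith [hC.diagGap_le_self hu]
  rcases le_total u b with hub | hbu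
  · linarith [hC.diagGap_le_sub_abs_sub_swap ha hb ⟨hau, hub⟩]
  · linarith [hC.diagGap_le_one_sub hu]

theorem mul_le_integral_diagGap (hC : IsCopula C) (ha : a ∈ Icc (0 : ℝ) 1)
    (hb : b ∈ Icc (0 : ℝ) 1) (hab : a ≤ b) :
    |C a b - C b a| * (b - a + |C a b - C b a|) ≤ ∫ u in (0 : ℝ)..1, diagGap C u := by
  have hleft := hC.abs_sub_swap_le_left ha hb
  have hright := hC.abs_sub_swap_le_one_sub ha hb
  have hgap : ∀ u ∈ Icc a b, |C a b - C b a| ≤ diagGap C u := fun u =>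
    hC.abs_sub_swap_le_diagGap ha hb
  have hm : 0 ≤ |C a b - C b a| := abs_nonneg _
  generalize |C a b - C b a| = m at hleft hright hgap hm ⊢
  have hsubset : Icc (a - m) (b + m) ⊆ Icc 0 1 := Icc_subset_Icc (by linarith) (by linarith)
  have hint : IntervalIntegrable (diagGap C) volume (a - m) (b + m) :=
    (hC.lipschitzOnWith_diagGap.continuousOn.mono hsubset).intervalIntegrable_of_Icc (by linarith)
  calc m * (b - a + m)
      = ∫ u in (a - m)..(b + m), trapezoid (a - m) (b + m) m u := by
        rw [integral_trapezoid hm (by linarith)]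
        ring
    _ ≤ ∫ u in (a - m)..(b + m), diagGap C u :=
        integral_mono_on (by linarith) ((continuous_trapezoid _ _ m).intervalIntegrable _ _) hint
          fun u hu =>
            trapezoid_le_of_lipschitzOnWith hC.lipschitzOnWith_diagGap ha hb (hsubset hu) hab hgap
    _ ≤ ∫ u in (0 : ℝ)..1, diagGap C u :=
        integral_mono_interval (by linarith) (by linarith) (by linarith)
          ((ae_restrict_mem measurableSet_Ioc).mono fun u hu =>
            hC.diagGap_nonneg (Ioc_subset_Icc_self hu))
          hC.intervalIntegrable_diagGap

theorem spearmanFootrule_le (hC : IsCopula C) (ha : a ∈ Icc (0 : ℝ) 1)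
    (hb : b ∈ Icc (0 : ℝ) 1) : spearmanFootrule C ≤ 1 - 12 * |C a b - C b a| ^ 2 := by
  wlog hab : a ≤ b generalizing a b
  · rw [abs_sub_comm]
    exact this hb ha (le_of_not_ge hab)
  have harea : 2 * |C a b - C b a| ^ 2 ≤ ∫ u in (0 : ℝ)..1, diagGap C u := calc
    _ = |C a b - C b a| * (|C a b - C b a| + |C a b - C b a|) := by ring
    _ ≤ |C a b - C b a| * (b - a + |C a b - C b a|) := by
      gcongr
      exact hC.abs_sub_swap_le_sub ha hb hab
    _ ≤ _ := hC.mul_le_integral_diagGap ha hb hab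
  linarith [hC.spearmanFootrule_eq]

theorem le_spearmanFootrule (hC : IsCopula C) (ha : a ∈ Icc (0 : ℝ) 1)
    (hb : b ∈ Icc (0 : ℝ) 1) (hm : 1 / 4 ≤ |C a b - C b a|) :
    24 * |C a b - C b a| ^ 2 - 12 * |C a b - C b a| + 1 ≤ spearmanFootrule C := by
  wlog hab : a ≤ b generalizing a b
  · rw [abs_sub_comm] at hm ⊢
    exact this hb ha hm (le_of_not_ge hab)
  have := hC.le_spearmanFootrule_of_diagGap_le (h := 1 - 2 * |C a b - C b a|) (by linarith)
    fun u hu => hC.diagGap_le_one_sub_two_mul ha hb hab hu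
  linarith

end Asymmetry

end IsCopula

theorem footrule_vs_asymmetry_general (C : ℝ → ℝ → ℝ) (m : ℝ) (hC : IsCopula C)
    (hattain : ∃ a ∈ Icc (0 : ℝ) 1, ∃ b ∈ Icc (0 : ℝ) 1, |C a b - C b a| = m) :
    spearmanFootrule C ≤ 1 - 12 * m ^ 2 ∧
    -(1 / 2) ≤ spearmanFootrule C ∧
    (1 / 4 ≤ m → 24 * m ^ 2 - 12 * m + 1 ≤ spearmanFootrule C) ∧
    (m = 1 / 3 → spearmanFootrule C = -(1 / 3)) := by
  obtain ⟨a, ha, b, hb, rfl⟩ := hattain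
  have hupper := hC.spearmanFootrule_le ha hb
  have hlower := hC.le_spearmanFootrule ha hb
  refine ⟨hupper, hC.neg_half_le_spearmanFootrule, hlower, fun hm => ?_⟩
  rw [hm] at hupper hlower
  linarith [hlower (by norm_num)]

theorem footrule_vs_asymmetry (C : ℝ → ℝ → ℝ) (m : ℝ) (hC : IsCopula C)
    (hbound : ∀ u ∈ Set.Icc (0:ℝ) 1, ∀ v ∈ Set.Icc (0:ℝ) 1, |C u v - C v u| ≤ m)
    (hattain : ∃ a ∈ Set.Icc (0:ℝ) 1, ∃ b ∈ Set.Icc (0:ℝ) 1, |C a b - C b a| = m) :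
    spearmanFootrule C ≤ 1 - 12 * m^2 ∧
    (0 ≤ m → m ≤ 1/4 → -(1/2) ≤ spearmanFootrule C) ∧
    (1/4 ≤ m → m ≤ 1/3 → 24 * m^2 - 12 * m + 1 ≤ spearmanFootrule C) ∧
    (m = 1/3 → spearmanFootrule C = -(1/3)) := by
  obtain ⟨hupper, hhalf, hlower, hthird⟩ := footrule_vs_asymmetry_general C m hC hattain
  exact ⟨hupper, fun _ _ => hhalf, fun hm _ => hlower hm, hthird⟩
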